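/- Let α ∈ ℝ, let c : ℝ → ℂ and φ, ψ : ℝ → ℂ^d be real analytic, 1-periodic, with ‖φ(x)‖ = ‖ψ(x)‖ = 1 for all x, and suppose c is not identically zero. Define the rank-at-most-one cocycle A(x) = c(x) φ(x) ψ(x)* ∈ ℂ^{d×d}. Then the top Lyapunov exponent satisfies L₁(α,A) = lim_{n→∞} (1/n) ∫₀¹ ln‖A_n(x)‖ dx = ∫₀¹ ln|c(x)| dx + ∫₀¹ ln|ψ(x+α)* φ(x)| dx, as an identity in [−∞,∞). In particular, if L₁(α,A) = −∞ and ∫₀¹ ln|c(x)| dx > −∞, then ∫₀¹ ln|ψ(x+α)* φ(x)| dx = −∞. -/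

import Mathlib

open MeasureTheory Filter Topology

/-- Iterates of the one-frequency cocycle: `A_n(x) = A(x+(n-1)α) ⋯ A(x+α) A(x)`. -/
noncomputable def matIter {d : ℕ} (α : ℝ) (A : ℝ → Matrix (Fin d) (Fin d) ℂ) :
    ℕ → ℝ → Matrix (Fin d) (Fin d) ℂ
  | 0, _ => 1
  | n + 1, x => matIter α A n (x + α) * A x

/-- The `k`-th largest singular value of a matrix, `1 ≤ k ≤ d`, via the
Courant–Fischer max–min characterization:
`σ_k(M) = max {t | ∃ V of dim k, ∀ v ∈ V, t‖v‖ ≤ ‖Mv‖}`. -/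
noncomputable def singVal {d : ℕ} (k : ℕ) (M : Matrix (Fin d) (Fin d) ℂ) : ℝ :=
  sSup {t : ℝ | ∃ V : Submodule ℂ (EuclideanSpace ℂ (Fin d)),
    Module.finrank ℂ V = k ∧ ∀ v ∈ V, t * ‖v‖ ≤ ‖(Matrix.toEuclideanLin M) v‖}

/-- The integral `∫ ln(g) dμ`, valued in `[-∞,∞]` (here `ln 0 = -∞`); by convention it is `-∞`
whenever the negative part of `ln g` is not `μ`-integrable. -/
noncomputable def elogIntegral {X : Type*} [MeasurableSpace X] (μ : Measure X) (g : X → ℝ) :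
    EReal :=
  if μ {x | g x = 0} = 0 ∧ (∫⁻ x, ENNReal.ofReal (-Real.log (g x)) ∂μ) ≠ ⊤ then
    (∫⁻ x, ENNReal.ofReal (Real.log (g x)) ∂μ).toEReal
      - (∫⁻ x, ENNReal.ofReal (-Real.log (g x)) ∂μ).toEReal
  else ⊥

/-- `L_k(α, A) = L`: the `k`-th Lyapunov exponent of the one-frequency cocycle `(α, A)`
is `L ∈ [-∞,∞)`, i.e. `L = lim_n (1/n) ∫₀¹ ln σ_k(A_n(x)) dx`. -/
def HasLyapunovExp {d : ℕ} (α : ℝ) (A : ℝ → Matrix (Fin d) (Fin d) ℂ) (k : ℕ) (L : EReal) :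
    Prop :=
  Tendsto (fun n : ℕ => (((n : ℝ)⁻¹ : ℝ) : EReal)
      * elogIntegral (volume.restrict (Set.Ioc (0:ℝ) 1))
          (fun x => singVal k (matIter α A n x)))
    atTop (𝓝 L)

/-- A real analytic, 1-periodic matrix valued map. -/
def AnalyticPeriodicMat {d e : ℕ} (A : ℝ → Matrix (Fin d) (Fin e) ℂ) : Prop :=
  Function.Periodic A 1 ∧ ∀ (x : ℝ) (i : Fin d) (j : Fin e), AnalyticAt ℝ (fun t => A t i j) x

def LogGood (F : ℝ → ℝ) (I : ℝ) : Prop :=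
  Function.Periodic F 1 ∧ (∀ᵐ x : ℝ, F x ≠ 0) ∧
  (∀ a b : ℝ, IntervalIntegrable (fun x => Real.log (F x)) volume a b) ∧
  ∫ x in (0:ℝ)..1, Real.log (F x) = I

lemma LogGood.mul {F G : ℝ → ℝ} {I J : ℝ} (hF : LogGood F I) (hG : LogGood G J) :
    LogGood (fun x => F x * G x) (I + J) := by
  obtain ⟨a1, a2, a3, a4⟩ := hF
  obtain ⟨b1, b2, b3, b4⟩ := hG
  have key : ∀ᵐ x : ℝ, Real.log (F x) + Real.log (G x) = Real.log (F x * G x) := by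
    filter_upwards [a2, b2] with x h1 h2
    rw [Real.log_mul h1 h2]
  refine ⟨fun x => by simp only [a1 x, b1 x], ?_, fun a b => ?_, ?_⟩
  · filter_upwards [a2, b2] with x h1 h2 using mul_ne_zero h1 h2
  · exact ((a3 a b).add (b3 a b)).congr_ae (ae_restrict_of_ae key)
  · rw [← a4, ← b4, ← intervalIntegral.integral_add (a3 0 1) (b3 0 1)]
    apply intervalIntegral.integral_congr_ae
    filter_upwards [key] with x hx _ using hx.symm

lemma LogGood.shift {F : ℝ → ℝ} {I : ℝ} (hF : LogGood F I) (α : ℝ) :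
    LogGood (fun x => F (x + α)) I := by
  obtain ⟨a1, a2, a3, a4⟩ := hF
  refine ⟨fun x => ?_, ?_, fun a b => ?_, ?_⟩
  · show F (x + 1 + α) = F (x + α)
    rw [add_right_comm, a1]
  · exact (measurePreserving_add_right volume α).quasiMeasurePreserving.ae a2
  · simpa using (a3 (a + α) (b + α)).comp_add_right α
  · rw [intervalIntegral.integral_comp_add_right (fun x => Real.log (F x)), ← a4]
    have hp : Function.Periodic (fun x => Real.log (F x)) 1 := fun x => by simp only [a1 x]
    have := hp.intervalIntegral_add_eq (0 + α) 0
    rw [show (1:ℝ) + α = 0 + α + 1 by ring, this, zero_add]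

lemma logGood_of_analytic {f : ℝ → ℂ} (hp : Function.Periodic f 1)
    (hf : ∀ x, AnalyticAt ℝ f x) (hne : ∃ x, f x ≠ 0) :
    LogGood (fun x => ‖f x‖) (∫ x in (0:ℝ)..1, Real.log ‖f x‖) := by
  refine ⟨fun x => by simp only [hp x], ?_, fun a b => ?_, rfl⟩
  · obtain ⟨x, hx⟩ := hne
    have h1 : AnalyticOnNhd ℝ f Set.univ := fun x _ => hf x
    have h2 := h1.preimage_zero_mem_codiscrete hx
    have h3 := ae_restrict_le_codiscreteWithin (μ := (volume : Measure ℝ)) MeasurableSet.univ h2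
    rw [Measure.restrict_univ] at h3
    filter_upwards [h3] with y hy
    simpa using hy
  · exact MeromorphicOn.intervalIntegrable_log_norm (fun x _ => (hf x).meromorphicAt)

lemma LogGood.elog {F : ℝ → ℝ} {I : ℝ} (hF : LogGood F I) :
    elogIntegral (volume.restrict (Set.Ioc (0:ℝ) 1)) F = (I : EReal) := by
  obtain ⟨a1, a2, a3, a4⟩ := hF
  have hi : Integrable (fun x => Real.log (F x)) (volume.restrict (Set.Ioc (0:ℝ) 1)) :=
    (intervalIntegrable_iff_integrableOn_Ioc_of_le zero_le_one).1 (a3 0 1)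
  have h1 : ∫⁻ x in Set.Ioc (0:ℝ) 1, ENNReal.ofReal (Real.log (F x)) ≠ ⊤ := hi.lintegral_lt_top.ne
  have h2 : ∫⁻ x in Set.Ioc (0:ℝ) 1, ENNReal.ofReal (-Real.log (F x)) ≠ ⊤ :=
    hi.neg.lintegral_lt_top.ne
  have h0 : (volume.restrict (Set.Ioc (0:ℝ) 1)) {x | F x = 0} = 0 := by
    have := ae_restrict_of_ae (s := Set.Ioc (0:ℝ) 1) a2
    rw [ae_iff] at this
    simpa using this
  rw [elogIntegral, if_pos ⟨h0, h2⟩, ← a4, intervalIntegral.integral_of_le zero_le_one,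
    integral_eq_lintegral_pos_part_sub_lintegral_neg_part hi, EReal.coe_sub,
    EReal.coe_ennreal_toReal h1, EReal.coe_ennreal_toReal h2]

lemma elog_zero : elogIntegral (volume.restrict (Set.Ioc (0:ℝ) 1)) (fun _ => (0:ℝ)) = ⊥ := by
  rw [elogIntegral, if_neg]
  simp

lemma norm_toLp_one {d : ℕ} {u : Fin d → ℂ} (hu : ∑ i, ‖u i‖ ^ 2 = 1) :
    ‖WithLp.toLp 2 u‖ = 1 := by
  rw [EuclideanSpace.norm_eq]
  simp [hu]

lemma singVal_rankOne {d : ℕ} (s : ℂ) (u v : Fin d → ℂ) (hu : ∑ i, ‖u i‖ ^ 2 = 1)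
    (hv : ∑ i, ‖v i‖ ^ 2 = 1) :
    singVal 1 (s • Matrix.vecMulVec u (star v)) = ‖s‖ := by
  have hu' := norm_toLp_one hu
  have hv' := norm_toLp_one hv
  have happ : ∀ w : EuclideanSpace ℂ (Fin d),
      ‖(Matrix.toEuclideanLin (s • Matrix.vecMulVec u (star v))) w‖
        = ‖s‖ * ‖inner ℂ (WithLp.toLp 2 v) w‖ := by
    intro w
    have : (Matrix.toEuclideanLin (s • Matrix.vecMulVec u (star v))) w
        = (s * inner ℂ (WithLp.toLp 2 v) w) • WithLp.toLp 2 u := by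
      ext i
      simp [Matrix.toEuclideanLin_apply, Matrix.smul_mulVec, Matrix.vecMulVec_mulVec,
        EuclideanSpace.inner_eq_star_dotProduct, dotProduct_comm]
      try ring
    rw [this, norm_smul, hu', mul_one, norm_mul]
  have hne : (WithLp.toLp 2 v : EuclideanSpace ℂ (Fin d)) ≠ 0 := by
    intro h; rw [h] at hv'; simp at hv'
  apply IsGreatest.csSup_eq
  constructor
  · refine ⟨Submodule.span ℂ {WithLp.toLp 2 v}, finrank_span_singleton hne, ?_⟩
    intro w hw
    obtain ⟨a, rfl⟩ := Submodule.mem_span_singleton.1 hw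
    rw [happ, inner_smul_right, inner_self_eq_norm_sq_to_K, norm_smul, norm_mul, hv']
    simp
  · rintro t ⟨V, hV, h⟩
    obtain ⟨w, hw0, -⟩ := finrank_eq_one_iff'.1 hV
    have hw : 0 < ‖(w : EuclideanSpace ℂ (Fin d))‖ := by
      rw [norm_pos_iff]; simpa using hw0
    have h1 := h w w.2
    rw [happ] at h1
    have h2 := norm_inner_le_norm (𝕜 := ℂ) (WithLp.toLp 2 v) (w : EuclideanSpace ℂ (Fin d))
    rw [hv', one_mul] at h2
    exact le_of_mul_le_mul_right (h1.trans (mul_le_mul_of_nonneg_left h2 (norm_nonneg s))) hw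

noncomputable def scal (α : ℝ) (c h : ℝ → ℂ) : ℕ → ℝ → ℂ
  | 0, x => c x
  | n + 1, x => scal α c h n (x + α) * (h x * c x)

lemma matIter_eq {d : ℕ} (α : ℝ) (c : ℝ → ℂ) (φ ψ : ℝ → Fin d → ℂ)
    (A : ℝ → Matrix (Fin d) (Fin d) ℂ)
    (hA : ∀ x : ℝ, A x = c x • Matrix.vecMulVec (φ x) (star (ψ x))) (n : ℕ) : ∀ x : ℝ,
    matIter α A (n + 1) x =
      scal α c (fun x => ∑ i, (starRingEnd ℂ) (ψ (x + α) i) * φ x i) n x •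
        Matrix.vecMulVec (φ (x + n * α)) (star (ψ x)) := by
  induction n with
  | zero => intro x; simp [matIter, scal, hA]
  | succ n ih =>
    intro x
    rw [matIter, ih, hA, Matrix.smul_mul, Matrix.mul_smul, Matrix.vecMulVec_mul_vecMulVec,
      Matrix.vecMulVec_smul, scal, smul_smul, smul_smul,
      show x + α + n * α = x + ((n + 1 : ℕ) : ℝ) * α by push_cast; ring]
    congr 1
    simp only [dotProduct, Pi.star_apply, starRingEnd_apply]
    ring

lemma scal_good {α : ℝ} {c h : ℝ → ℂ} {C G : ℝ} (hc : LogGood (fun x => ‖c x‖) C)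
    (hh : LogGood (fun x => ‖h x‖) G) (n : ℕ) :
    LogGood (fun x => ‖scal α c h n x‖) ((n + 1) * C + n * G) := by
  induction n with
  | zero => simpa [scal] using hc
  | succ n ih =>
    have := (ih.shift α).mul (hh.mul hc)
    simp only [scal, norm_mul]
    convert this using 1
    push_cast; ring

/-- For the rank-at-most-one analytic 1-periodic cocycle
`A(x) = c(x) φ(x) ψ(x)*` with `‖φ(x)‖ = ‖ψ(x)‖ = 1` and `c` not identically zero, the top
Lyapunov exponent satisfies, as an identity in `[-∞,∞)`,
`L₁(α,A) = ∫₀¹ ln|c| + ∫₀¹ ln|ψ(x+α)*φ(x)| dx`.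
In particular if `L₁(α,A) = -∞` and `∫₀¹ ln|c| > -∞` then `∫₀¹ ln|ψ(x+α)*φ(x)| dx = -∞`. -/
theorem stmt_19 {d : ℕ} (α : ℝ) (c : ℝ → ℂ) (φ ψ : ℝ → Fin d → ℂ)
    (hc_per : Function.Periodic c 1) (hc_an : ∀ x : ℝ, AnalyticAt ℝ c x)
    (hφ_per : Function.Periodic φ 1) (hφ_an : ∀ (x : ℝ) (i : Fin d), AnalyticAt ℝ (fun t => φ t i) x)
    (hψ_per : Function.Periodic ψ 1) (hψ_an : ∀ (x : ℝ) (i : Fin d), AnalyticAt ℝ (fun t => ψ t i) x)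
    (hφ_norm : ∀ x : ℝ, ∑ i, ‖φ x i‖ ^ 2 = 1)
    (hψ_norm : ∀ x : ℝ, ∑ i, ‖ψ x i‖ ^ 2 = 1)
    (hc_ne : ∃ x : ℝ, c x ≠ 0)
    (A : ℝ → Matrix (Fin d) (Fin d) ℂ)
    (hA : ∀ x : ℝ, A x = c x • Matrix.vecMulVec (φ x) (star (ψ x))) :
    HasLyapunovExp α A 1
      (elogIntegral (volume.restrict (Set.Ioc (0:ℝ) 1)) (fun x => ‖c x‖)
        + elogIntegral (volume.restrict (Set.Ioc (0:ℝ) 1))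
            (fun x => ‖∑ i, (starRingEnd ℂ) (ψ (x + α) i) * φ x i‖)) ∧
    (HasLyapunovExp α A 1 ⊥ →
      elogIntegral (volume.restrict (Set.Ioc (0:ℝ) 1)) (fun x => ‖c x‖) ≠ ⊥ →
      elogIntegral (volume.restrict (Set.Ioc (0:ℝ) 1))
        (fun x => ‖∑ i, (starRingEnd ℂ) (ψ (x + α) i) * φ x i‖) = ⊥) := by
  set h : ℝ → ℂ := fun x => ∑ i, (starRingEnd ℂ) (ψ (x + α) i) * φ x i with hh
  have hsv : ∀ n : ℕ, (fun x => singVal 1 (matIter α A (n + 1) x)) = fun x => ‖scal α c h n x‖ := by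
    intro n
    funext x
    rw [matIter_eq α c φ ψ A hA n x, singVal_rankOne _ _ _ (hφ_norm _) (hψ_norm _)]
  have hC := logGood_of_analytic hc_per hc_an hc_ne
  have main : HasLyapunovExp α A 1
      (elogIntegral (volume.restrict (Set.Ioc (0:ℝ) 1)) (fun x => ‖c x‖)
        + elogIntegral (volume.restrict (Set.Ioc (0:ℝ) 1)) (fun x => ‖h x‖)) := by
    unfold HasLyapunovExp
    by_cases hz : ∃ x, h x ≠ 0
    · have hper : Function.Periodic h 1 := by
        intro x
        simp only [hh, add_right_comm x 1 α, hψ_per (x + α), hφ_per x]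
      have han : ∀ x, AnalyticAt ℝ h x := by
        intro x
        refine Finset.analyticAt_fun_sum _ (fun i _ => ?_)
        refine AnalyticAt.mul ?_ (hφ_an x i)
        have h1 : AnalyticAt ℝ (fun t => ψ (t + α) i) x :=
          AnalyticAt.fun_comp (g := fun t => ψ t i) (f := fun t => t + α) (hψ_an (x + α) i)
            (by fun_prop)
        exact AnalyticAt.fun_comp (g := fun z : ℂ => (starRingEnd ℂ) z)
          (Complex.conjCLE.toContinuousLinearMap.analyticAt _) h1
      have hG := logGood_of_analytic hper han hz
      rw [hC.elog, hG.elog, ← tendsto_add_atTop_iff_nat 1]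
      set C := ∫ x in (0:ℝ)..1, Real.log ‖c x‖
      set G := ∫ x in (0:ℝ)..1, Real.log ‖h x‖
      simp only [hsv, (scal_good hC hG _).elog]
      rw [← EReal.coe_add]
      simp only [← EReal.coe_mul]
      refine (continuous_coe_real_ereal.tendsto _).comp ?_
      have e : ∀ n : ℕ, (((n + 1 : ℕ) : ℝ)⁻¹) * (((n:ℝ) + 1) * C + n * G)
          = (C + G) - G * (1 / ((n:ℝ) + 1)) := by
        intro n
        have : (n:ℝ) + 1 ≠ 0 := by positivity
        push_cast
        field_simp
        ring
      simp only [e]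
      simpa using (tendsto_one_div_add_atTop_nhds_zero_nat (𝕜 := ℝ)).const_mul G
        |>.const_sub (C + G)
    · push Not at hz
      have h0 : (fun x => ‖h x‖) = fun _ => (0:ℝ) := by funext x; simp [hz x]
      rw [h0, elog_zero, EReal.add_bot]
      refine tendsto_const_nhds.congr' ?_
      filter_upwards [eventually_ge_atTop 2] with n hn
      obtain ⟨m, rfl⟩ := Nat.exists_eq_add_of_le' hn
      have h1 : (fun x => ‖scal α c h (m + 1) x‖) = fun _ => (0:ℝ) := by
        funext x; simp [scal, hz x]
      rw [hsv (m + 1), h1, elog_zero, EReal.coe_mul_bot_of_pos (by positivity)]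
  refine ⟨main, fun hb hne => ?_⟩
  have := tendsto_nhds_unique main hb
  rcases EReal.add_eq_bot_iff.1 this with h1 | h1
  · exact absurd h1 hne
  · exact h1
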